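/- arXiv:2102.02987 — 2 statements merged into one kernel-verified Lean document; each statement's English description precedes it below -/
import Mathlib

section
/- Let N_b ≥ 3 and N_t ≥ 2 be integers and let S be the UF-4BL array with parameters N_b, N_t. Then the difference coarray D(S) contains every integer d with |d| ≤ J, where J = 4N_bN_t + 7N_t + 4N_b + 12; i.e., the central consecutive segment of the coarray has at least 2J + 1 elements. -/
/-!
Let `P = 4 Nb + 7` be the spacing of the transfer layer. In these terms the array consists of

* a left part `0, 3`, `7 + 4i`, `P + 1, P + 2`, `P + 8 + 4i`,
* the transfer layer `m P + 5` with `2 ≤ m ≤ Nt + 1`,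
* a right part `(Nt + 1) P + 12 + 4i`, `(Nt + 2) P + 4, (Nt + 2) P + 6`, `(Nt + 2) P + 11 + 4i`,

where always `0 ≤ i < Nb`, and the segment ends at `J = (Nt + 1) P + 5`. The coarray is symmetric,
so let `0 ≤ d = q P + r` with `0 ≤ r < P`. The differences (transfer - left) realise the residues
`r = 2, 3, 4, 5`, `8 + 4i`, `9 + 4i`, and the differences (right - transfer) the residues `r = 1`,
`6 + 4i`, `7 + 4i`, `P - 1`; together with `r = 0` (transfer - transfer) these are all residues
modulo `P`. For each residue this works for all `q` but a few at the two ends of its range; the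
exceptions are differences inside the left part or inside the right part (small `q`) or
differences (right - left) (large `q`).
-/

/-- Difference coarray of a finite set of sensor positions. -/
def dca (S : Finset ℤ) : Finset ℤ := (S ×ˢ S).image fun p => p.1 - p.2

/-- The uniform linear array with initial position `I`, interspace `s` and `N` sensors. -/
def ULA (I s : ℤ) (N : ℕ) : Finset ℤ :=
  (Finset.range N).image fun k : ℕ => I + (k : ℤ) * s

/-- The UF-4BL sparse array with parameters `Nb` (base-layer sub-ULA size) and
`Nt` (transfer-layer size). -/
def UF4BL (Nb Nt : ℕ) : Finset ℤ :=
  ULA 0 3 2 ∪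
  ULA 7 4 Nb ∪
  ULA (4 * (Nb : ℤ) + 8) 1 2 ∪
  ULA (4 * (Nb : ℤ) + 15) 4 Nb ∪
  ULA (8 * (Nb : ℤ) + 19) (4 * (Nb : ℤ) + 7) Nt ∪
  ULA (4 * (Nb : ℤ) * Nt + 7 * Nt + 4 * Nb + 19) 4 Nb ∪
  ULA (4 * (Nb : ℤ) * Nt + 7 * Nt + 8 * Nb + 18) 2 2 ∪
  ULA (4 * (Nb : ℤ) * Nt + 7 * Nt + 8 * Nb + 25) 4 Nb

open scoped Pointwise in
theorem dca_eq_sub (S : Finset ℤ) : dca S = S - S :=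
  rfl

theorem mem_dca_of_sub_eq {S : Finset ℤ} {x y d : ℤ} (hx : x ∈ S) (hy : y ∈ S)
    (h : x - y = d := by ring) : d ∈ dca S := by
  rw [dca_eq_sub, ← h]
  exact Finset.sub_mem_sub hx hy

theorem neg_mem_dca {S : Finset ℤ} {d : ℤ} (hd : d ∈ dca S) : -d ∈ dca S := by
  rw [dca_eq_sub] at hd
  obtain ⟨x, hx, y, hy, rfl⟩ := Finset.mem_sub.1 hd
  exact mem_dca_of_sub_eq hy hx

theorem mem_dca_of_abs_mem_dca {S : Finset ℤ} {d : ℤ} (hd : |d| ∈ dca S) : d ∈ dca S := by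
  rcases abs_choice d with h | h
  · exact h ▸ hd
  · exact neg_neg d ▸ neg_mem_dca (h ▸ hd)

theorem add_mul_mem_ULA {I s k : ℤ} {N : ℕ} (hk₀ : 0 ≤ k) (hk : k < N) :
    I + k * s ∈ ULA I s N := by
  lift k to ℕ using hk₀
  exact Finset.mem_image_of_mem _ (Finset.mem_range.2 (by exact_mod_cast hk))

namespace UF4BL

variable {Nb Nt : ℕ}

-- The period: consecutive sensors of the transfer layer are `P` apart.
local notation "P" => (4 * (Nb : ℤ) + 7)

theorem originPair_mem (i : ℤ) (hi₀ : 0 ≤ i := by lia) (hi : i < 2 := by lia) :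
    3 * i ∈ UF4BL Nb Nt := by
  have := add_mul_mem_ULA (I := 0) (s := 3) (N := 2) hi₀ hi
  simp only [UF4BL, Finset.mem_union]
  grind

theorem leftInner_mem (i : ℤ) (hi₀ : 0 ≤ i := by lia) (hi : i < Nb := by lia) :
    7 + 4 * i ∈ UF4BL Nb Nt := by
  have := add_mul_mem_ULA (I := 7) (s := 4) hi₀ hi
  simp only [UF4BL, Finset.mem_union]
  grind

theorem leftPair_mem (i : ℤ) (hi₀ : 0 ≤ i := by lia) (hi : i < 2 := by lia) :
    P + 1 + i ∈ UF4BL Nb Nt := by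
  have := add_mul_mem_ULA (I := 4 * Nb + 8) (s := 1) (N := 2) hi₀ hi
  simp only [UF4BL, Finset.mem_union]
  grind

theorem leftOuter_mem (i : ℤ) (hi₀ : 0 ≤ i := by lia) (hi : i < Nb := by lia) :
    P + 8 + 4 * i ∈ UF4BL Nb Nt := by
  have := add_mul_mem_ULA (I := 4 * Nb + 15) (s := 4) hi₀ hi
  simp only [UF4BL, Finset.mem_union]
  grind

theorem transfer_mem (m : ℤ) (hm₂ : 2 ≤ m := by lia) (hm : m ≤ Nt + 1 := by lia) :
    m * P + 5 ∈ UF4BL Nb Nt := by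
  have := add_mul_mem_ULA (I := 8 * Nb + 19) (s := P) (k := m - 2) (N := Nt) (by lia) (by lia)
  simp only [UF4BL, Finset.mem_union]
  grind

theorem rightInner_mem (i : ℤ) (hi₀ : 0 ≤ i := by lia) (hi : i < Nb := by lia) :
    (Nt + 1) * P + 12 + 4 * i ∈ UF4BL Nb Nt := by
  have := add_mul_mem_ULA (I := 4 * Nb * Nt + 7 * Nt + 4 * Nb + 19) (s := 4) hi₀ hi
  simp only [UF4BL, Finset.mem_union]
  grind

theorem rightPair_mem (i : ℤ) (hi₀ : 0 ≤ i := by lia) (hi : i < 2 := by lia) :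
    (Nt + 2) * P + 4 + 2 * i ∈ UF4BL Nb Nt := by
  have := add_mul_mem_ULA (I := 4 * Nb * Nt + 7 * Nt + 8 * Nb + 18) (s := 2) (N := 2) hi₀ hi
  simp only [UF4BL, Finset.mem_union]
  grind

theorem rightOuter_mem (i : ℤ) (hi₀ : 0 ≤ i := by lia) (hi : i < Nb := by lia) :
    (Nt + 2) * P + 11 + 4 * i ∈ UF4BL Nb Nt := by
  have := add_mul_mem_ULA (I := 4 * Nb * Nt + 7 * Nt + 8 * Nb + 25) (s := 4) hi₀ hi
  simp only [UF4BL, Finset.mem_union]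
  grind

-- Prevents the elaborator from evaluating the array in search of further default arguments.
attribute [local irreducible] dca UF4BL

variable {q r i : ℤ}

theorem mul_period_mem_dca (hb : 2 ≤ Nb) (hq₀ : 0 ≤ q) (hq : q ≤ Nt + 1) :
    q * P ∈ dca (UF4BL Nb Nt) := by
  obtain hq | rfl | rfl : q < Nt ∨ q = Nt ∨ q = Nt + 1 := by lia
  · exact mem_dca_of_sub_eq (transfer_mem (q + 2)) (transfer_mem 2)
  · exact mem_dca_of_sub_eq (rightInner_mem 0) (leftOuter_mem 1)
  · exact mem_dca_of_sub_eq (rightInner_mem (Nb - 1)) (leftPair_mem 0)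

theorem mul_period_add_one_mem_dca (hb : 2 ≤ Nb) (hq₀ : 0 ≤ q) (hq : q ≤ Nt + 1) :
    q * P + 1 ∈ dca (UF4BL Nb Nt) := by
  obtain rfl | ⟨hq₁, hq⟩ | rfl : q = 0 ∨ (1 ≤ q ∧ q ≤ Nt) ∨ q = Nt + 1 := by lia
  · exact mem_dca_of_sub_eq (leftPair_mem 1) (leftPair_mem 0)
  · exact mem_dca_of_sub_eq (rightPair_mem 1) (transfer_mem (Nt + 2 - q))
  · exact mem_dca_of_sub_eq (rightInner_mem 0) (leftInner_mem 1)

theorem mul_period_add_two_mem_dca (hq₀ : 0 ≤ q) (hq : q ≤ Nt + 1) :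
    q * P + 2 ∈ dca (UF4BL Nb Nt) := by
  obtain rfl | rfl | hq₂ : q = 0 ∨ q = 1 ∨ 2 ≤ q := by lia
  · exact mem_dca_of_sub_eq (rightPair_mem 1) (rightPair_mem 0)
  · exact mem_dca_of_sub_eq (leftPair_mem 1) (originPair_mem 0)
  · exact mem_dca_of_sub_eq (transfer_mem q) (originPair_mem 1)

theorem mul_period_add_three_mem_dca (hq₀ : 0 ≤ q) (hq : q ≤ Nt + 1) :
    q * P + 3 ∈ dca (UF4BL Nb Nt) := by
  obtain rfl | ⟨hq₁, hq⟩ | rfl : q = 0 ∨ (1 ≤ q ∧ q ≤ Nt) ∨ q = Nt + 1 := by lia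
  · exact mem_dca_of_sub_eq (originPair_mem 1) (originPair_mem 0)
  · exact mem_dca_of_sub_eq (transfer_mem (q + 1)) (leftPair_mem 1)
  · exact mem_dca_of_sub_eq (rightPair_mem 0) (leftPair_mem 0)

theorem mul_period_add_four_mem_dca (hb : 2 ≤ Nb) (hq₀ : 0 ≤ q) (hq : q ≤ Nt + 1) :
    q * P + 4 ∈ dca (UF4BL Nb Nt) := by
  obtain rfl | ⟨hq₁, hq⟩ | rfl : q = 0 ∨ (1 ≤ q ∧ q ≤ Nt) ∨ q = Nt + 1 := by lia
  · exact mem_dca_of_sub_eq (leftInner_mem 1) (leftInner_mem 0)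
  · exact mem_dca_of_sub_eq (transfer_mem (q + 1)) (leftPair_mem 0)
  · exact mem_dca_of_sub_eq (rightPair_mem 1) (leftPair_mem 1)

theorem mul_period_add_five_mem_dca (hb : 1 ≤ Nb) (hq₀ : 0 ≤ q) (hq : q ≤ Nt + 1) :
    q * P + 5 ∈ dca (UF4BL Nb Nt) := by
  obtain rfl | rfl | hq₂ : q = 0 ∨ q = 1 ∨ 2 ≤ q := by lia
  · exact mem_dca_of_sub_eq (leftPair_mem 0) (leftInner_mem (Nb - 1))
  · exact mem_dca_of_sub_eq (leftOuter_mem 0) (originPair_mem 1)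
  · exact mem_dca_of_sub_eq (transfer_mem q) (originPair_mem 0)

theorem mul_period_add_period_sub_one_mem_dca (hb : 1 ≤ Nb) (hq₀ : 0 ≤ q) (hq : q ≤ Nt) :
    q * P + (P - 1) ∈ dca (UF4BL Nb Nt) := by
  obtain hq | rfl : q < Nt ∨ q = Nt := by lia
  · exact mem_dca_of_sub_eq (rightPair_mem 0) (transfer_mem (Nt + 1 - q))
  · exact mem_dca_of_sub_eq (rightInner_mem (Nb - 1)) (leftPair_mem 1)

theorem mul_period_add_six_add_four_mul_mem_dca (hq₀ : 0 ≤ q) (hq : q ≤ Nt)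
    (hi₀ : 0 ≤ i) (hi : i < Nb) : q * P + (6 + 4 * i) ∈ dca (UF4BL Nb Nt) := by
  obtain rfl | hq₁ : q = 0 ∨ 1 ≤ q := by lia
  · exact mem_dca_of_sub_eq (leftPair_mem 1) (leftInner_mem (Nb - 1 - i))
  · exact mem_dca_of_sub_eq (rightOuter_mem i) (transfer_mem (Nt + 2 - q))

theorem mul_period_add_seven_add_four_mul_mem_dca (hq₀ : 0 ≤ q) (hq : q ≤ Nt)
    (hi₀ : 0 ≤ i) (hi : i < Nb) : q * P + (7 + 4 * i) ∈ dca (UF4BL Nb Nt) := by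
  obtain hq | rfl : q < Nt ∨ q = Nt := by lia
  · exact mem_dca_of_sub_eq (rightInner_mem i) (transfer_mem (Nt + 1 - q))
  obtain rfl | hi₁ : i = 0 ∨ 1 ≤ i := by lia
  · exact mem_dca_of_sub_eq (rightPair_mem 0) (leftOuter_mem (Nb - 1))
  · exact mem_dca_of_sub_eq (rightInner_mem (i - 1)) (leftPair_mem 0)

theorem mul_period_add_eight_add_four_mul_mem_dca (hb : 3 ≤ Nb) (hq₀ : 0 ≤ q) (hq : q ≤ Nt)
    (hi₀ : 0 ≤ i) (hi : i < Nb) : q * P + (8 + 4 * i) ∈ dca (UF4BL Nb Nt) := by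
  obtain hq | rfl : q < Nt ∨ q = Nt := by lia
  · exact mem_dca_of_sub_eq (transfer_mem (q + 2)) (leftOuter_mem (Nb - 1 - i))
  obtain hi | rfl : i + 1 < Nb ∨ i = Nb - 1 := by lia
  · exact mem_dca_of_sub_eq (rightInner_mem (i + 1)) (leftOuter_mem 0)
  · exact mem_dca_of_sub_eq (rightInner_mem 0) (leftInner_mem 2)

theorem mul_period_add_nine_add_four_mul_mem_dca (hq₀ : 0 ≤ q) (hq : q ≤ Nt)
    (hi₀ : 0 ≤ i) (hi : i < Nb) : q * P + (9 + 4 * i) ∈ dca (UF4BL Nb Nt) := by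
  obtain hq₁ | rfl : 1 ≤ q ∨ q = 0 := by lia
  · exact mem_dca_of_sub_eq (transfer_mem (q + 1)) (leftInner_mem (Nb - 1 - i))
  obtain hi | rfl : i + 1 < Nb ∨ i = Nb - 1 := by lia
  · exact mem_dca_of_sub_eq (leftPair_mem 0) (leftInner_mem (Nb - 2 - i))
  · exact mem_dca_of_sub_eq (leftPair_mem 0) (originPair_mem 1)

theorem mul_period_add_mem_dca_of_le_five (hb : 2 ≤ Nb) (hq₀ : 0 ≤ q) (hq : q ≤ Nt + 1)
    (hr₀ : 0 ≤ r) (hr : r ≤ 5) : q * P + r ∈ dca (UF4BL Nb Nt) := by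
  interval_cases r
  · simpa only [add_zero] using mul_period_mem_dca hb hq₀ hq
  · exact mul_period_add_one_mem_dca hb hq₀ hq
  · exact mul_period_add_two_mem_dca hq₀ hq
  · exact mul_period_add_three_mem_dca hq₀ hq
  · exact mul_period_add_four_mem_dca hb hq₀ hq
  · exact mul_period_add_five_mem_dca (by lia) hq₀ hq

theorem mul_period_add_mem_dca_of_six_le (hb : 3 ≤ Nb) (hq₀ : 0 ≤ q) (hq : q ≤ Nt)
    (hr₆ : 6 ≤ r) (hr : r < P) : q * P + r ∈ dca (UF4BL Nb Nt) := by
  obtain rfl | hr : r = P - 1 ∨ r < P - 1 := by lia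
  · exact mul_period_add_period_sub_one_mem_dca (by lia) hq₀ hq
  obtain ⟨i, hi₀, hi, rfl | rfl | rfl | rfl⟩ : ∃ i : ℤ, 0 ≤ i ∧ i < Nb ∧
      (r = 6 + 4 * i ∨ r = 7 + 4 * i ∨ r = 8 + 4 * i ∨ r = 9 + 4 * i) :=
    ⟨(r - 6) / 4, by lia, by lia, by lia⟩
  · exact mul_period_add_six_add_four_mul_mem_dca hq₀ hq hi₀ hi
  · exact mul_period_add_seven_add_four_mul_mem_dca hq₀ hq hi₀ hi
  · exact mul_period_add_eight_add_four_mul_mem_dca hb hq₀ hq hi₀ hi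
  · exact mul_period_add_nine_add_four_mul_mem_dca hq₀ hq hi₀ hi

theorem mem_dca_of_le {d : ℤ} (hb : 3 ≤ Nb) (hd₀ : 0 ≤ d) (hd : d ≤ (Nt + 1) * P + 5) :
    d ∈ dca (UF4BL Nb Nt) := by
  have hP : 0 < P := by lia
  have hdiv : d / P * P + d % P = d := Int.ediv_mul_add_emod d P
  have hq₀ : 0 ≤ d / P := Int.ediv_nonneg hd₀ hP.le
  have hr₀ : 0 ≤ d % P := Int.emod_nonneg d hP.ne'
  rw [← hdiv]
  rcases le_or_gt (d % P) 5 with hr | hr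
  · have hq : d / P < Nt + 2 := Int.ediv_lt_of_lt_mul hP (by linarith)
    exact mul_period_add_mem_dca_of_le_five (by lia) hq₀ (by lia) hr₀ hr
  · have hq : d / P < Nt + 1 := lt_of_mul_lt_mul_right (by linarith) hP.le
    exact mul_period_add_mem_dca_of_six_le hb hq₀ (by lia) hr (Int.emod_lt_of_pos d hP)

end UF4BL

theorem uf4bl_central_segment_general (Nb Nt : ℕ) (hb : 3 ≤ Nb) :
    ∀ d : ℤ, |d| ≤ 4 * (Nb : ℤ) * Nt + 7 * Nt + 4 * Nb + 12 →
      d ∈ dca (UF4BL Nb Nt) :=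
  fun d hd ↦ mem_dca_of_abs_mem_dca (UF4BL.mem_dca_of_le hb (abs_nonneg d) (by linarith))

/-- The difference coarray of the UF-4BL array contains every integer `d` with
`|d| ≤ J`, where `J = 4·Nb·Nt + 7·Nt + 4·Nb + 12`. -/
theorem uf4bl_central_segment (Nb Nt : ℕ) (hb : 3 ≤ Nb) (ht : 2 ≤ Nt) :
    ∀ d : ℤ, |d| ≤ 4 * (Nb : ℤ) * Nt + 7 * Nt + 4 * Nb + 12 →
      d ∈ dca (UF4BL Nb Nt) :=
  uf4bl_central_segment_general Nb Nt hb
end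

section
/- Let N_b ≥ 1 and N_t ≥ 2 be integers and let S be the UF-4BL array with parameters N_b, N_t. Then its weight function satisfies w_S(1) = 1, w_S(2) = 1, w_S(3) = 2, and w_S(4) = 4N_b − 3. -/
/-! The eight sub-arrays occur in increasing order, and consecutive ones are at distance
`4, 5, 6, 8, 7, 3, 5`. Hence a difference of at most `4` arises inside a single sub-array or at one
of the two junctions of length `4` and `3`, and each junction contributes exactly one pair. A ULA
of `N` sensors with interspace `s` has `N - k` pairs at difference `k * s`, and none at differences
that `s` does not divide; so the transfer layer, with interspace `4 * Nb + 7`, adds nothing. -/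

/-- Weight function: number of sensor pairs with difference `n`. -/
def weight (S : Finset ℤ) (n : ℤ) : ℕ :=
  ((S ×ˢ S).filter fun p => p.1 - p.2 = n).card

/-- The number of pairs in `S × T` whose second entry exceeds the first by `n`, encoded by the first
entries. It records what the differences between two parts of an array add to its weight. -/
def crossWeight (S T : Finset ℤ) (n : ℤ) : ℕ :=
  (S.filter fun x => x + n ∈ T).card

section Weight

variable {S T U : Finset ℤ} {n : ℤ}

lemma weight_eq_crossWeight_self (S : Finset ℤ) (n : ℤ) : weight S n = crossWeight S S n := by
  refine Finset.card_bij' (fun p _ => p.2) (fun x _ => (x + n, x)) ?_ ?_ ?_ ?_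
  all_goals grind

lemma weight_image_const_add (c : ℤ) (S : Finset ℤ) (n : ℤ) :
    weight (S.image (c + ·)) n = weight S n := by
  simp only [weight_eq_crossWeight_self, crossWeight, Finset.filter_image]
  rw [Finset.card_image_of_injective _ (add_right_injective c)]
  simp [add_assoc]

lemma crossWeight_eq_zero_iff : crossWeight S T n = 0 ↔ ∀ x ∈ S, x + n ∉ T := by
  rw [crossWeight, Finset.card_eq_zero, Finset.filter_eq_empty_iff]

lemma crossWeight_union_left (h : Disjoint S T) :
    crossWeight (S ∪ T) U n = crossWeight S U n + crossWeight T U n := by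
  rw [crossWeight, Finset.filter_union,
    Finset.card_union_of_disjoint (Finset.disjoint_filter_filter h), crossWeight, crossWeight]

lemma crossWeight_union_right (h : Disjoint T U) :
    crossWeight S (T ∪ U) n = crossWeight S T n + crossWeight S U n := by
  simp only [crossWeight, Finset.mem_union]
  rw [Finset.filter_or, Finset.card_union_of_disjoint]
  exact Finset.disjoint_filter.2 fun x _ hT hU => Finset.disjoint_left.1 h hT hU

lemma weight_union_of_lt (h : ∀ x ∈ S, ∀ y ∈ T, x < y) (hn : 0 ≤ n) :
    weight (S ∪ T) n = weight S n + weight T n + crossWeight S T n := by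
  have hdisj : Disjoint S T :=
    Finset.disjoint_left.2 fun x hS hT => (h x hS x hT).false
  have hdown : crossWeight T S n = 0 :=
    crossWeight_eq_zero_iff.2 fun y hy hyn => by linarith [h _ hyn y hy]
  simp only [weight_eq_crossWeight_self, crossWeight_union_left hdisj,
    crossWeight_union_right hdisj, hdown]
  ring

lemma weight_union_of_gap (h : ∀ x ∈ S, ∀ y ∈ T, x + n < y) (hn : 0 ≤ n) :
    weight (S ∪ T) n = weight S n + weight T n := by
  have hcross : crossWeight S T n = 0 :=
    crossWeight_eq_zero_iff.2 fun x hx hxn => (h x hx _ hxn).false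
  rw [weight_union_of_lt (fun x hx y hy => by linarith [h x hx y hy]) hn, hcross, add_zero]

lemma crossWeight_of_unique_close_pair {a b d : ℤ} (ha : a ∈ S) (hb : b ∈ T)
    (h : ∀ x ∈ S, ∀ y ∈ T, y ≤ x + d → x = a ∧ y = b) (hn : n ≤ d) :
    crossWeight S T n = if b = a + n then 1 else 0 := by
  have hpair : ∀ x ∈ S, x + n ∈ T → x = a ∧ x + n = b :=
    fun x hx hxn => h x hx _ hxn (by linarith)
  split_ifs with hab
  · refine Finset.card_eq_one.2 ⟨a, ?_⟩
    ext x
    rw [Finset.mem_filter, Finset.mem_singleton]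
    constructor
    · exact fun hx => (hpair x hx.1 hx.2).1
    · rintro rfl
      exact ⟨ha, hab ▸ hb⟩
  · refine crossWeight_eq_zero_iff.2 fun x hx hxn => hab ?_
    obtain ⟨rfl, hb⟩ := hpair x hx hxn
    exact hb.symm

end Weight

section ULA

variable {I s x : ℤ} {N : ℕ}

lemma mem_ULA : x ∈ ULA I s N ↔ ∃ k < N, I + (k : ℤ) * s = x := by
  simp only [ULA, Finset.mem_image, Finset.mem_range]

lemma add_mul_mem_ULA_iff (hs : s ≠ 0) (k : ℕ) : I + k * s ∈ ULA I s N ↔ k < N := by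
  simp [mem_ULA, hs]

lemma card_ULA (hs : s ≠ 0) : (ULA I s N).card = N := by
  rw [ULA, Finset.card_image_of_injective, Finset.card_range]
  intro j k hjk
  simpa [hs] using hjk

lemma le_of_mem_ULA (hs : 0 ≤ s) (hx : x ∈ ULA I s N) : I ≤ x := by
  obtain ⟨k, -, rfl⟩ := mem_ULA.1 hx
  exact le_add_of_nonneg_right (by positivity)

lemma add_le_of_mem_ULA (hs : 0 ≤ s) (hx : x ∈ ULA I s N) : x + s ≤ I + N * s := by
  obtain ⟨k, hk, rfl⟩ := mem_ULA.1 hx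
  have hkN : (k : ℤ) + 1 ≤ N := by exact_mod_cast hk
  calc I + k * s + s = I + (k + 1) * s := by ring
    _ ≤ I + N * s := by gcongr

lemma ULA_eq_image_const_add (I s : ℤ) (N : ℕ) : ULA I s N = (ULA 0 s N).image (I + ·) := by
  simp [ULA, Finset.image_image, Function.comp_def]

lemma weight_ULA_eq_weight_ULA_zero (I s : ℤ) (N : ℕ) (n : ℤ) :
    weight (ULA I s N) n = weight (ULA 0 s N) n := by
  rw [ULA_eq_image_const_add, weight_image_const_add]

lemma weight_ULA_mul (hs : s ≠ 0) (k : ℕ) : weight (ULA I s N) (k * s) = N - k := by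
  have hfilter : (ULA I s N).filter (fun x => x + k * s ∈ ULA I s N) = ULA I s (N - k) := by
    ext x
    rw [Finset.mem_filter]
    constructor
    · rintro ⟨hx, hxk⟩
      obtain ⟨j, -, rfl⟩ := mem_ULA.1 hx
      rw [add_assoc, ← add_mul, ← Nat.cast_add, add_mul_mem_ULA_iff hs] at hxk
      exact (add_mul_mem_ULA_iff hs j).2 (by lia)
    · intro hx
      obtain ⟨j, hj, rfl⟩ := mem_ULA.1 hx
      rw [add_assoc, ← add_mul, ← Nat.cast_add, add_mul_mem_ULA_iff hs, add_mul_mem_ULA_iff hs]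
      lia
  rw [weight_eq_crossWeight_self, crossWeight, hfilter, card_ULA hs]

lemma weight_ULA_of_not_dvd {n : ℤ} (h : ¬ s ∣ n) : weight (ULA I s N) n = 0 := by
  rw [weight_eq_crossWeight_self, crossWeight_eq_zero_iff]
  intro x hx hxn
  obtain ⟨j, -, rfl⟩ := mem_ULA.1 hx
  obtain ⟨k, -, hk⟩ := mem_ULA.1 hxn
  exact h ⟨k - j, by linear_combination -hk⟩

lemma weight_ULA {n : ℤ} (hs : 0 < s) (hn : 0 ≤ n) :
    weight (ULA I s N) n = if s ∣ n then N - (n / s).toNat else 0 := by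
  split_ifs with h
  · have hquot : n = (n / s).toNat * s := by
      rw [Int.toNat_of_nonneg (Int.ediv_nonneg hn hs.le), Int.ediv_mul_cancel h]
    conv_lhs => rw [hquot]
    exact weight_ULA_mul hs.ne' _
  · exact weight_ULA_of_not_dvd h

lemma weight_ULA_of_lt {n : ℤ} (hn : 0 < n) (h : n < s) : weight (ULA I s N) n = 0 :=
  weight_ULA_of_not_dvd fun hdvd => (Int.le_of_dvd hn hdvd).not_gt h

end ULA

section UF4BL

variable {Nb Nt : ℕ} {n : ℤ}

lemma weight_first_cluster (hb : 1 ≤ Nb) (hn : 0 ≤ n) (hn4 : n ≤ 4) :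
    weight (ULA 0 3 2 ∪ ULA 7 4 Nb) n =
      weight (ULA 0 3 2) n + weight (ULA 0 4 Nb) n + if n = 4 then 1 else 0 := by
  have hlast : (3 : ℤ) ∈ ULA 0 3 2 := mem_ULA.2 ⟨1, by simp⟩
  have hfirst : (7 : ℤ) ∈ ULA 7 4 Nb := mem_ULA.2 ⟨0, by simpa⟩
  have hleft : ∀ x ∈ ULA 0 3 2, x ≤ 3 := fun x hx => by
    have := add_le_of_mem_ULA (by norm_num) hx
    lia
  have hright : ∀ y ∈ ULA 7 4 Nb, 7 ≤ y := fun y hy => le_of_mem_ULA (by norm_num) hy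
  rw [weight_union_of_lt (by grind) hn,
    crossWeight_of_unique_close_pair hlast hfirst (by grind) hn4, weight_ULA_eq_weight_ULA_zero 7]
  grind

lemma weight_second_cluster (I : ℤ) (hb : 1 ≤ Nb) (hn : 0 ≤ n) (hn4 : n ≤ 4) :
    weight (ULA I 4 Nb ∪ ULA (I + 4 * Nb - 1) 2 2) n =
      weight (ULA 0 4 Nb) n + weight (ULA 0 2 2) n + if n = 3 then 1 else 0 := by
  have hlast : I + 4 * Nb - 4 ∈ ULA I 4 Nb := mem_ULA.2 ⟨Nb - 1, by lia, by lia⟩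
  have hfirst : I + 4 * Nb - 1 ∈ ULA (I + 4 * Nb - 1) 2 2 := mem_ULA.2 ⟨0, by simp⟩
  have hlt : ∀ x ∈ ULA I 4 Nb, ∀ y ∈ ULA (I + 4 * Nb - 1) 2 2, x < y := fun x hx y hy => by
    linarith [add_le_of_mem_ULA (by norm_num) hx, le_of_mem_ULA (by norm_num) hy]
  have hclose : ∀ x ∈ ULA I 4 Nb, ∀ y ∈ ULA (I + 4 * Nb - 1) 2 2,
      y ≤ x + 4 → x = I + 4 * Nb - 4 ∧ y = I + 4 * Nb - 1 := by
    intro x hx y hy hxy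
    obtain ⟨j, hj, rfl⟩ := mem_ULA.1 hx
    obtain ⟨k, hk, rfl⟩ := mem_ULA.1 hy
    lia
  rw [weight_union_of_lt hlt hn, crossWeight_of_unique_close_pair hlast hfirst hclose hn4,
    weight_ULA_eq_weight_ULA_zero I, weight_ULA_eq_weight_ULA_zero (_ - 1)]
  grind

lemma UF4BL_eq_union_of_clusters (Nb Nt : ℕ) :
    UF4BL Nb Nt =
      (ULA 0 3 2 ∪ ULA 7 4 Nb) ∪
      ULA (4 * (Nb : ℤ) + 8) 1 2 ∪
      ULA (4 * (Nb : ℤ) + 15) 4 Nb ∪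
      ULA (8 * (Nb : ℤ) + 19) (4 * (Nb : ℤ) + 7) Nt ∪
      (ULA (4 * (Nb : ℤ) * Nt + 7 * Nt + 4 * Nb + 19) 4 Nb ∪
        ULA (4 * (Nb : ℤ) * Nt + 7 * Nt + 4 * Nb + 19 + 4 * Nb - 1) 2 2) ∪
      ULA (4 * (Nb : ℤ) * Nt + 7 * Nt + 8 * Nb + 25) 4 Nb := by
  have hstart : 4 * (Nb : ℤ) * Nt + 7 * Nt + 4 * Nb + 19 + 4 * Nb - 1 =
      4 * (Nb : ℤ) * Nt + 7 * Nt + 8 * Nb + 18 := by ring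
  rw [hstart, UF4BL]
  simp only [Finset.union_assoc]

lemma mem_Icc_of_mem_transfer_layer {x : ℤ}
    (hx : x ∈ ULA (8 * (Nb : ℤ) + 19) (4 * Nb + 7) Nt) :
    x ∈ Set.Icc (8 * (Nb : ℤ) + 19) (4 * (Nb : ℤ) * Nt + 7 * Nt + 4 * Nb + 12) := by
  have hs : (0 : ℤ) ≤ 4 * Nb + 7 := by positivity
  exact ⟨le_of_mem_ULA hs hx, by linarith [add_le_of_mem_ULA hs hx]⟩

lemma weight_UF4BL (hb : 1 ≤ Nb) (ht : 1 ≤ Nt) (hn : 0 < n) (hn4 : n ≤ 4) :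
    weight (UF4BL Nb Nt) n =
      weight (ULA 0 1 2) n + weight (ULA 0 2 2) n + weight (ULA 0 3 2) n +
        4 * weight (ULA 0 4 Nb) n + (if n = 3 then 1 else 0) + if n = 4 then 1 else 0 := by
  have bounds {I s : ℤ} {N : ℕ} (hs : 0 ≤ s) : ∀ x ∈ ULA I s N, I ≤ x ∧ x + s ≤ I + N * s :=
    fun x hx => ⟨le_of_mem_ULA hs hx, add_le_of_mem_ULA hs hx⟩
  have htransfer : ∀ x ∈ ULA (8 * (Nb : ℤ) + 19) (4 * Nb + 7) Nt,
      8 * (Nb : ℤ) + 19 ≤ x ∧ x ≤ 4 * (Nb : ℤ) * Nt + 7 * Nt + 4 * Nb + 12 :=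
    fun _ => mem_Icc_of_mem_transfer_layer
  have hlength : 4 * (Nb : ℤ) + 7 ≤ 4 * (Nb : ℤ) * Nt + 7 * Nt := by
    have : (1 : ℤ) ≤ Nt := by exact_mod_cast ht
    nlinarith
  have htransfer_weight : weight (ULA (8 * (Nb : ℤ) + 19) (4 * Nb + 7) Nt) n = 0 :=
    weight_ULA_of_lt hn (by lia)
  rw [UF4BL_eq_union_of_clusters]
  generalize 4 * (Nb : ℤ) * Nt + 7 * Nt = T at *
  rw [weight_union_of_gap ?_ hn.le, weight_union_of_gap ?_ hn.le, weight_union_of_gap ?_ hn.le,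
    weight_union_of_gap ?_ hn.le, weight_union_of_gap ?_ hn.le, weight_first_cluster hb hn.le hn4,
    weight_second_cluster _ hb hn.le hn4, htransfer_weight,
    weight_ULA_eq_weight_ULA_zero (4 * Nb + 8), weight_ULA_eq_weight_ULA_zero (4 * Nb + 15),
    weight_ULA_eq_weight_ULA_zero (T + 8 * Nb + 25)]
  · ring
  -- The five gaps between consecutive clusters have lengths `5`, `6`, `8`, `7` and `5`.
  all_goals grind

end UF4BL

/-- The weight function of the UF-4BL array satisfies
`w(1) = 1`, `w(2) = 1`, `w(3) = 2`, `w(4) = 4·Nb - 3`. -/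
theorem uf4bl_weights (Nb Nt : ℕ) (hb : 1 ≤ Nb) (ht : 2 ≤ Nt) :
    weight (UF4BL Nb Nt) 1 = 1 ∧
    weight (UF4BL Nb Nt) 2 = 1 ∧
    weight (UF4BL Nb Nt) 3 = 2 ∧
    weight (UF4BL Nb Nt) 4 = 4 * Nb - 3 := by
  have hw {n : ℤ} := weight_UF4BL (n := n) hb (one_le_two.trans ht)
  refine ⟨?_, ?_, ?_, ?_⟩
  · simp [hw, weight_ULA]
  · simp [hw, weight_ULA]
  · simp [hw, weight_ULA]
  · have hsum : 4 * (Nb - 1) + 1 = 4 * Nb - 3 := by lia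
    simpa [hw, weight_ULA] using hsum
end
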